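/- For every integer g ≥ 3, the Lebesgue integral over x : Fin g → (0, ∞) and y' : Fin (g−1) → (0, ∞) of the function (x, y') ↦ (det M_g(x, ŷ))⁻², where ŷ : Fin g → ℝ agrees with y' on the first g−1 coordinates and has last coordinate ŷ(g−1) = 1, is finite and equals binomial(2(g−1), g−1) · ζ(2g−3), where ζ(m) = ∑_{n ≥ 1} n^{−m}. This is the statement that the Feynman residue of the wheel graph with g spokes equals binomial(2(g−1), g−1) · ζ(2g−3). -/

import Mathlib

open MeasureTheory

/-- Cyclic successor on `Fin g`. -/
def cyc {g : ℕ} (i : Fin g) : Fin g := ⟨((i : ℕ) + 1) % g, Nat.mod_lt _ i.pos⟩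

/-- The wheel Laplacian `M_g(x, y)`: the Gram matrix of the triangle cycle
basis `cᵢ = spokeᵢ − spokeᵢ₊₁ + rimᵢ` of the wheel graph with `g` spokes `x`
and `g` rim edges `y` (indices cyclic modulo `g`). -/
noncomputable def wheelLap (g : ℕ) (x y : Fin g → ℝ) :
    Matrix (Fin g) (Fin g) ℝ :=
  Matrix.of fun i j =>
    if i = j then x i + x (cyc i) + y i
    else if j = cyc i then -x (cyc i)
    else if i = cyc j then -x (cyc j)
    else 0

/-- Extension of `y : Fin (g−1) → ℝ` to `Fin g → ℝ` with last coordinate `1`. -/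
noncomputable def extendOne (g : ℕ) (y : Fin (g - 1) → ℝ) : Fin g → ℝ :=
  fun i => if h : (i : ℕ) < g - 1 then y ⟨i, h⟩ else 1

/-! Read the wheel as a ladder network closing up around the hub: passing a rim edge of weight `y`
turns the impedance `w` into `w / (1 + w * y)`, and passing a spoke of weight `x` adds `x⁻¹`. If
the impedances `w i` close up cyclically, the Laplacian is a product of two cyclic bidiagonal
matrices, and its determinant is `∏ x * (P - 1) ^ 2 / P` with `P = ∏ (1 + w i * y i)`.

The closing condition determines the first spoke from the impedance `w` behind it, as the inverse of
the gap between `w` and the impedance returning around the rim. The latter has derivative `P⁻²` in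
`w`, which is what makes `w` a good variable in place of that spoke. In logarithmic coordinates for
the successive factors of the impedance, the remaining Jacobian cancels all weights: the integrand
depends only on `σ = log P`, and integrating out the rest gives the square of the volume
`σ ^ m / m!` of a simplex, where `m` is the number of remaining spokes. Finally
the identity `e^σ (e^σ + 1) / (e^σ - 1) ^ 3 = ∑ n ^ 2 * e^(-n σ)` turns the integral over `σ` into
the zeta value. -/

section HalfLine

/-- Lebesgue measure on the positive half-line. -/
noncomputable abbrev posVol : Measure ℝ := volume.restrict (Set.Ioi 0)

lemma ae_posVol_pos : ∀ᵐ x ∂posVol, 0 < x := ae_restrict_mem measurableSet_Ioi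

lemma lintegral_posVol_eq_of_bijOn {s : Set ℝ} (hs : MeasurableSet s) {φ φ' : ℝ → ℝ}
    (hd : ∀ x ∈ s, HasDerivAt φ (φ' x) x) (hφ : Set.BijOn φ s (Set.Ioi 0)) (H : ℝ → ENNReal) :
    ∫⁻ x, H x ∂posVol = ∫⁻ t in s, ENNReal.ofReal |φ' t| * H (φ t) := by
  rw [posVol, ← hφ.image_eq]
  exact lintegral_image_eq_lintegral_abs_deriv_mul hs (fun x hx => (hd x hx).hasDerivWithinAt)
    hφ.injOn H

lemma lintegral_posVol_inv_sq_mul (H : ℝ → ENNReal) :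
    ∫⁻ x, ENNReal.ofReal (x⁻¹ ^ 2) * H x ∂posVol = ∫⁻ x, H x⁻¹ ∂posVol := by
  have bij : Set.BijOn (·⁻¹ : ℝ → ℝ) (Set.Ioi 0) (Set.Ioi 0) :=
    Set.InvOn.bijOn ⟨fun x _ => inv_inv x, fun x _ => inv_inv x⟩
      (fun x (hx : 0 < x) => inv_pos.2 hx) fun x (hx : 0 < x) => inv_pos.2 hx
  rw [lintegral_posVol_eq_of_bijOn measurableSet_Ioi
    (fun x hx => hasDerivAt_inv (ne_of_gt hx)) bij fun x => H x⁻¹]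
  simp [abs_inv]

lemma lintegral_posVol_exp_sub_one {C : ℝ} (hC : 0 < C) (H : ℝ → ENNReal) :
    ∫⁻ x, H x ∂posVol =
      ∫⁻ t, ENNReal.ofReal (C * Real.exp t) * H (C * (Real.exp t - 1)) ∂posVol := by
  have bij : Set.BijOn (fun t => C * (Real.exp t - 1)) (Set.Ioi 0) (Set.Ioi 0) := by
    refine Set.InvOn.bijOn (f' := fun x => Real.log (x / C + 1)) ⟨fun t _ => ?_, fun x hx => ?_⟩
      (fun t ht => ?_) fun x hx => ?_
    · simp [hC.ne']
    · have : 0 < x / C + 1 := by have := div_pos hx hC; linarith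
      simp only [Real.exp_log this, add_sub_cancel_right]
      field_simp
    · exact mul_pos hC (sub_pos.2 (Real.one_lt_exp_iff.2 ht))
    · exact Real.log_pos (lt_add_of_pos_left 1 (div_pos hx hC))
  rw [lintegral_posVol_eq_of_bijOn measurableSet_Ioi
    (fun t _ => ((Real.hasDerivAt_exp t).sub_const 1).const_mul C) bij]
  simp_rw [abs_of_pos (mul_pos hC (Real.exp_pos _))]

lemma bijOn_sub_of_deriv_lt_one {h h' : ℝ → ℝ} {C : ℝ} (h0 : 0 ≤ h 0)
    (hC : ∀ w, 0 ≤ w → h w ≤ C) (hd : ∀ w, 0 ≤ w → HasDerivAt h (h' w) w)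
    (h'_lt : ∀ w, 0 < w → h' w < 1) :
    Set.BijOn (fun w => w - h w) (Set.Ioi 0 ∩ {w | h w < w}) (Set.Ioi 0) := by
  have hderiv : ∀ w, 0 ≤ w → HasDerivAt (fun w => w - h w) (1 - h' w) w := fun w hw =>
    (hasDerivAt_id' w).sub (hd w hw)
  have hcont : ContinuousOn (fun w => w - h w) (Set.Ici 0) := fun w hw =>
    (hderiv w hw).continuousAt.continuousWithinAt
  have hmono : StrictMonoOn (fun w => w - h w) (Set.Ici 0) :=
    strictMonoOn_of_deriv_pos (convex_Ici 0) hcont fun w hw => by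
      rw [interior_Ici] at hw
      rw [(hderiv w (le_of_lt hw)).deriv]
      exact sub_pos.2 (h'_lt w hw)
  refine ⟨fun w (hw : 0 < w ∧ h w < w) => sub_pos.2 hw.2,
    hmono.injOn.mono (Set.inter_subset_left.trans Set.Ioi_subset_Ici_self),
    fun z (hz : 0 < z) => ?_⟩
  have hCz : 0 ≤ z + C := by linarith [hC 0 le_rfl]
  obtain ⟨w, hw, rfl⟩ := intermediate_value_Icc hCz
    (hcont.mono Set.Icc_subset_Ici_self) (show z ∈ Set.Icc _ _ from
      ⟨by linarith, by linarith [hC (z + C) hCz]⟩)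
  refine ⟨w, ⟨hw.1.lt_of_ne' ?_, sub_pos.1 hz⟩, rfl⟩
  rintro rfl
  linarith

lemma lintegral_posVol_sub {h h' : ℝ → ℝ} {C : ℝ} (hm : Measurable h) (h0 : 0 ≤ h 0)
    (hC : ∀ w, 0 ≤ w → h w ≤ C) (hd : ∀ w, 0 ≤ w → HasDerivAt h (h' w) w)
    (h'_lt : ∀ w, 0 < w → h' w < 1) (H : ℝ → ENNReal) :
    ∫⁻ z, H z ∂posVol =
      ∫⁻ w, (if h w < w then ENNReal.ofReal (1 - h' w) * H (w - h w) else 0) ∂posVol := by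
  have hset : MeasurableSet {w | h w < w} := measurableSet_lt hm measurable_id
  rw [lintegral_posVol_eq_of_bijOn (measurableSet_Ioi.inter hset)
    (φ := fun w => w - h w) (fun w hw => (hasDerivAt_id' w).sub (hd w (le_of_lt hw.1)))
    (bijOn_sub_of_deriv_lt_one h0 hC hd h'_lt), Set.inter_comm, ← Measure.restrict_restrict hset,
    ← lintegral_indicator hset]
  refine lintegral_congr_ae ?_
  filter_upwards [ae_posVol_pos] with w hw
  simp only [Set.indicator_apply, Set.mem_ofPred_eq, abs_of_pos (sub_pos.2 (h'_lt w hw))]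

lemma lintegral_posVol_add {a : ℝ} (ha : 0 ≤ a) (H : ℝ → ENNReal) :
    ∫⁻ x, H (a + x) ∂posVol = ∫⁻ x, (if a < x then H x else 0) ∂posVol := by
  have bij : Set.BijOn (fun x => x - a) (Set.Ioi a) (Set.Ioi 0) :=
    Set.InvOn.bijOn (f' := fun x => x + a) ⟨fun x _ => by simp, fun x _ => by simp⟩
      (fun x (hx : a < x) => sub_pos.2 hx) fun x (hx : 0 < x) => lt_add_of_pos_left a hx
  rw [lintegral_posVol_eq_of_bijOn measurableSet_Ioi
    (fun x _ => (hasDerivAt_id' x).sub_const a) bij fun x => H (a + x),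
    ← Set.inter_eq_left.2 (Set.Ioi_subset_Ioi ha), ← Measure.restrict_restrict measurableSet_Ioi,
    ← lintegral_indicator measurableSet_Ioi]
  simp [Set.indicator_apply]

lemma lintegral_pow_lt (k : ℕ) {r : ℝ} (hr : 0 ≤ r) :
    ∫⁻ x, (if x < r then ENNReal.ofReal (x ^ k / k.factorial) else 0) ∂posVol =
      ENNReal.ofReal (r ^ (k + 1) / (k + 1).factorial) := by
  have hset : ∫⁻ x, (if x < r then ENNReal.ofReal (x ^ k / k.factorial) else 0) ∂posVol =
      ∫⁻ x in Set.Ioc 0 r, ENNReal.ofReal (x ^ k / k.factorial) := by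
    rw [← restrict_Ioo_eq_restrict_Ioc, ← Set.Iio_inter_Ioi,
      ← Measure.restrict_restrict measurableSet_Iio, ← lintegral_indicator measurableSet_Iio]
    simp [Set.indicator_apply]
  rw [hset, ← ofReal_integral_eq_lintegral_ofReal
      ((Continuous.integrableOn_Icc (by fun_prop)).mono_set Set.Ioc_subset_Icc_self),
    ← intervalIntegral.integral_of_le hr, intervalIntegral.integral_div, integral_pow,
    Nat.factorial_succ]
  · push_cast
    field_simp
    simp
  · filter_upwards [ae_restrict_mem measurableSet_Ioc] with x hx
    have := hx.1
    simp only [Pi.zero_apply]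
    positivity

lemma lintegral_pow_mul_exp (k : ℕ) {b : ℝ} (hb : 0 < b) :
    ∫⁻ x, ENNReal.ofReal (x ^ k * Real.exp (-(b * x))) ∂posVol =
      ENNReal.ofReal (k.factorial / b ^ (k + 1)) := by
  have h : ∫ x in Set.Ioi 0, x ^ k * Real.exp (-(b * x)) = k.factorial / b ^ (k + 1) := by
    have := Real.integral_rpow_mul_exp_neg_mul_Ioi (a := k + 1) (by positivity) hb
    simp only [add_sub_cancel_right, Real.rpow_natCast, Real.Gamma_nat_eq_factorial] at this
    rw [this, ← Nat.cast_add_one, Real.rpow_natCast, one_div, inv_pow, inv_mul_eq_div]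
  rw [← h, ofReal_integral_eq_lintegral_ofReal]
  · refine Integrable.of_integral_ne_zero ?_
    rw [h]
    positivity
  · filter_upwards [ae_posVol_pos] with x hx
    positivity

end HalfLine

section ProductMeasure

variable {α : Type*} [MeasurableSpace α]

lemma lintegral_pi_succ (μ : Measure α) [SigmaFinite μ] (n : ℕ) {F : (Fin (n + 1) → α) → ENNReal}
    (hF : Measurable F) :
    ∫⁻ v, F v ∂(Measure.pi fun _ => μ) =
      ∫⁻ a, ∫⁻ v, F (Fin.cons a v) ∂(Measure.pi fun _ => μ) ∂μ := by
  have h := (measurePreserving_piFinSuccAbove (fun _ : Fin (n + 1) => μ) 0).symm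
  rw [← h.lintegral_comp hF,
    lintegral_prod (fun z => F ((MeasurableEquiv.piFinSuccAbove (fun _ => α) 0).symm z))
      (hF.comp h.measurable).aemeasurable]
  simp [MeasurableEquiv.piFinSuccAbove_symm_apply, Fin.insertNthEquiv]

lemma measurable_fin_cons {n : ℕ} :
    Measurable fun z : α × (Fin n → α) => (Fin.cons z.1 z.2 : Fin (n + 1) → α) :=
  measurable_pi_lambda _ fun i => by
    induction i using Fin.cases with
    | zero => exact measurable_fst
    | succ i => exact (measurable_pi_apply i).comp measurable_snd

lemma ae_pi_forall {ι : Type*} [Fintype ι] {μ : Measure α} [SigmaFinite μ] {P : α → Prop}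
    (h : ∀ᵐ a ∂μ, P a) : ∀ᵐ v : ι → α ∂(Measure.pi fun _ => μ), ∀ i, P (v i) :=
  Filter.eventually_all.2 fun i =>
    (Measure.tendsto_eval_ae_ae (μ := fun _ : ι => μ) (i := i)).eventually h

lemma lintegral_pi_prod {β : Type*} [MeasurableSpace β] {ι : Type*} [Fintype ι]
    (μ : Measure α) (ν : Measure β) [SigmaFinite μ] [SigmaFinite ν]
    {F : (ι → α) → (ι → β) → ENNReal} (hF : Measurable (Function.uncurry F)) :
    ∫⁻ p : ι → α × β, F (fun i => (p i).1) (fun i => (p i).2) ∂(Measure.pi fun _ => μ.prod ν) =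
      ∫⁻ a, ∫⁻ b, F a b ∂(Measure.pi fun _ => ν) ∂(Measure.pi fun _ => μ) :=
  ((measurePreserving_arrowProdEquivProdArrow α β ι (fun _ => μ) (fun _ => ν)).lintegral_comp
    hF).trans (lintegral_prod _ hF.aemeasurable)

lemma lintegral_pi_succ_prod_pi {β : Type*} [MeasurableSpace β] (μ : Measure α) (ν : Measure β)
    [SigmaFinite μ] [SigmaFinite ν] {n : ℕ} {F : (Fin (n + 1) → β) × (Fin n → α) → ENNReal}
    (hF : Measurable F) :
    ∫⁻ z, F z ∂((Measure.pi fun _ => ν).prod (Measure.pi fun _ => μ)) =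
      ∫⁻ q : Fin n → α × β, ∫⁻ b, F (Fin.cons b fun i => (q i).2, fun i => (q i).1) ∂ν
        ∂(Measure.pi fun _ => μ.prod ν) := by
  have hF_cons : Measurable fun z : ((Fin n → α) × (Fin n → β)) × β =>
      F (Fin.cons z.2 z.1.2, z.1.1) :=
    hF.comp ((measurable_fin_cons.comp (measurable_snd.prodMk measurable_fst.snd)).prodMk
      measurable_fst.fst)
  rw [lintegral_prod_symm' _ hF]
  refine .trans (lintegral_congr fun a => ?_) (lintegral_pi_prod μ ν
    (F := fun a v => ∫⁻ b, F (Fin.cons b v, a) ∂ν) hF_cons.lintegral_prod_right').symm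
  rw [lintegral_pi_succ ν n (F := fun v => F (v, a)) (by fun_prop)]
  exact lintegral_lintegral_swap
    (hF.comp (measurable_fin_cons.prodMk measurable_const)).aemeasurable

lemma volume_restrict_forall_pos (ι κ : Type*) [Fintype ι] [Fintype κ] :
    (volume : Measure ((ι → ℝ) × (κ → ℝ))).restrict {p | (∀ i, 0 < p.1 i) ∧ ∀ j, 0 < p.2 j} =
      (Measure.pi fun _ => posVol).prod (Measure.pi fun _ => posVol) := by
  have hset : {p : (ι → ℝ) × (κ → ℝ) | (∀ i, 0 < p.1 i) ∧ ∀ j, 0 < p.2 j} =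
      (Set.univ.pi fun _ => Set.Ioi 0) ×ˢ (Set.univ.pi fun _ => Set.Ioi 0) := by
    ext p
    simp [Set.mem_pi]
  rw [hset, Measure.volume_eq_prod, ← Measure.prod_restrict, volume_pi, volume_pi,
    Measure.restrict_pi_pi, Measure.restrict_pi_pi]

end ProductMeasure

section Simplex

lemma lintegral_pi_sum (k : ℕ) {h : ℝ → ENNReal} (hh : Measurable h) :
    ∫⁻ v : Fin (k + 1) → ℝ, h (∑ i, v i) ∂(Measure.pi fun _ => posVol) =
      ∫⁻ σ, ENNReal.ofReal (σ ^ k / k.factorial) * h σ ∂posVol := by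
  induction k generalizing h with
  | zero =>
    rw [lintegral_pi_succ _ _ (by fun_prop)]
    simp
  | succ k ih =>
    have hmeas : Measurable fun p : ℝ × ℝ => if p.1 < p.2 then
        ENNReal.ofReal (p.1 ^ k / k.factorial) * h p.2 else 0 :=
      Measurable.ite (measurableSet_lt measurable_fst measurable_snd) (by fun_prop)
        measurable_const
    calc ∫⁻ v : Fin (k + 2) → ℝ, h (∑ i, v i) ∂(Measure.pi fun _ => posVol)
      _ = ∫⁻ a, ∫⁻ v : Fin (k + 1) → ℝ, h (a + ∑ i, v i) ∂(Measure.pi fun _ => posVol) ∂posVol := by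
        rw [lintegral_pi_succ _ _ (by fun_prop)]
        simp only [Fin.sum_univ_succ (n := k + 1), Fin.cons_zero, Fin.cons_succ]
      _ = ∫⁻ a, ∫⁻ σ, ENNReal.ofReal (σ ^ k / k.factorial) * h (a + σ) ∂posVol ∂posVol :=
        lintegral_congr fun a => ih (h := fun σ => h (a + σ)) (by fun_prop)
      _ = ∫⁻ σ, ∫⁻ a, ENNReal.ofReal (σ ^ k / k.factorial) * h (a + σ) ∂posVol ∂posVol :=
        lintegral_lintegral_swap (by fun_prop)
      _ = ∫⁻ σ, ∫⁻ ρ, (if σ < ρ then ENNReal.ofReal (σ ^ k / k.factorial) * h ρ else 0)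
            ∂posVol ∂posVol := by
        refine lintegral_congr_ae ?_
        filter_upwards [ae_posVol_pos] with σ hσ
        simp_rw [← lintegral_posVol_add hσ.le, add_comm σ]
      _ = ∫⁻ ρ, ∫⁻ σ, (if σ < ρ then ENNReal.ofReal (σ ^ k / k.factorial) * h ρ else 0)
            ∂posVol ∂posVol :=
        lintegral_lintegral_swap hmeas.aemeasurable
      _ = ∫⁻ ρ, ENNReal.ofReal (ρ ^ (k + 1) / (k + 1).factorial) * h ρ ∂posVol := by
        refine lintegral_congr_ae ?_
        filter_upwards [ae_posVol_pos] with ρ hρ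
        rw [← lintegral_pow_lt k hρ.le, ← lintegral_mul_const _ (Measurable.ite measurableSet_Iio
          (by fun_prop) measurable_const)]
        simp only [ite_mul, zero_mul]

lemma lintegral_ite_sum_lt (m : ℕ) {r : ℝ} (hr : 0 < r) (c : ENNReal) :
    ∫⁻ v : Fin m → ℝ, (if ∑ i, v i < r then c else 0) ∂(Measure.pi fun _ => posVol) =
      ENNReal.ofReal (r ^ m / m.factorial) * c := by
  rcases m with _ | k
  · simp [hr]
  · rw [lintegral_pi_sum k (h := fun σ => if σ < r then c else 0)
      (Measurable.ite measurableSet_Iio measurable_const measurable_const),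
      ← lintegral_pow_lt k hr.le, ← lintegral_mul_const _ (Measurable.ite measurableSet_Iio
      (by fun_prop) measurable_const)]
    simp only [mul_ite, ite_mul, mul_zero, zero_mul]

lemma lintegral_lintegral_sum_lt_add_sum (m : ℕ) {G : ℝ → ENNReal} (hG : Measurable G) :
    ∫⁻ p : Fin m → ℝ × ℝ, ∫⁻ τ,
        (if ∑ i, (p i).2 < τ + ∑ i, (p i).1 then G (τ + ∑ i, (p i).1) else 0) ∂posVol
        ∂(Measure.pi fun _ => posVol.prod posVol) =
      ∫⁻ σ, ENNReal.ofReal ((σ ^ m / m.factorial) ^ 2) * G σ ∂posVol := by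
  let V : ℝ → ENNReal := fun r => ENNReal.ofReal (r ^ m / m.factorial)
  let F : (Fin m → ℝ) → (Fin m → ℝ) → ℝ → ENNReal := fun t s τ =>
    if ∑ i, s i < τ + ∑ i, t i then G (τ + ∑ i, t i) else 0
  have hF_meas : Measurable fun z : ((Fin m → ℝ) × (Fin m → ℝ)) × ℝ => F z.1.1 z.1.2 z.2 :=
    Measurable.ite (measurableSet_lt (by fun_prop) (by fun_prop)) (by fun_prop) measurable_const
  calc _ = ∫⁻ t, ∫⁻ s, ∫⁻ τ, F t s τ ∂posVol
          ∂(Measure.pi fun _ => posVol) ∂(Measure.pi fun _ => posVol) :=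
        lintegral_pi_prod posVol posVol (F := fun t s => ∫⁻ τ, F t s τ ∂posVol)
          hF_meas.lintegral_prod_right'
    _ = ∫⁻ t : Fin m → ℝ, ∫⁻ τ, V (τ + ∑ i, t i) * G (τ + ∑ i, t i) ∂posVol
          ∂(Measure.pi fun _ => posVol) := by
        refine lintegral_congr_ae ?_
        filter_upwards [ae_pi_forall ae_posVol_pos] with t ht
        have hF_t : Measurable (Function.uncurry (F t)) :=
          hF_meas.comp (f := fun z : (Fin m → ℝ) × ℝ => ((t, z.1), z.2)) (by fun_prop)
        rw [lintegral_lintegral_swap hF_t.aemeasurable]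
        refine lintegral_congr_ae ?_
        filter_upwards [ae_posVol_pos] with τ hτ
        exact lintegral_ite_sum_lt m
          (add_pos_of_pos_of_nonneg hτ (Finset.sum_nonneg fun i _ => (ht i).le)) _
    _ = ∫⁻ v : Fin (m + 1) → ℝ, V (∑ i, v i) * G (∑ i, v i) ∂(Measure.pi fun _ => posVol) := by
        rw [lintegral_lintegral_swap (by fun_prop), lintegral_pi_succ _ _ (by fun_prop)]
        simp only [Fin.sum_univ_succ, Fin.cons_zero, Fin.cons_succ]
    _ = ∫⁻ σ, ENNReal.ofReal ((σ ^ m / m.factorial) ^ 2) * G σ ∂posVol := by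
        rw [lintegral_pi_sum m (h := fun σ => V σ * G σ) (by fun_prop)]
        refine lintegral_congr_ae ?_
        filter_upwards [ae_posVol_pos] with σ hσ
        rw [← mul_assoc, ← ENNReal.ofReal_mul (by positivity), sq]

end Simplex

section CyclicBidiagonal

variable {R : Type*} {n : ℕ}

/-- The cyclic bidiagonal matrix with diagonal entries `d i` and superdiagonal entries `-c i`, the
last of which sits in the lower left corner. The two contributions are added, so that for `n = 1`
the only entry is `d 0 - c 0`. -/
def cycBidiag [Ring R] (d c : Fin n → R) : Matrix (Fin n) (Fin n) R :=
  Matrix.of fun i j => (if i = j then d i else 0) - if j = cyc i then c i else 0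

lemma cyc_eq_add_one [NeZero n] (i : Fin n) : cyc i = i + 1 := by
  ext
  simp [cyc, Fin.val_add]

lemma cyc_castSucc (i : Fin n) : cyc i.castSucc = i.succ := by
  rw [cyc_eq_add_one, Fin.coeSucc_eq_succ]

lemma cyc_last (n : ℕ) : cyc (Fin.last n) = 0 := by
  rw [cyc_eq_add_one, Fin.last_add_one]

lemma cyc_bijective : Function.Bijective (cyc : Fin n → Fin n) := by
  rcases n with _ | n
  · exact ⟨fun i => i.elim0, fun i => i.elim0⟩
  · exact (funext cyc_eq_add_one : (cyc : Fin (n + 1) → Fin (n + 1)) = _) ▸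
      AddGroup.addRight_bijective 1

lemma cyc_ne_self (hn : 2 ≤ n) (i : Fin n) : cyc i ≠ i := by
  have : NeZero n := ⟨by omega⟩
  rw [cyc_eq_add_one, Ne, add_eq_left, Fin.ext_iff]
  simp [Nat.mod_eq_of_lt hn]

lemma cyc_cyc_ne_self (hn : 3 ≤ n) (i : Fin n) : cyc (cyc i) ≠ i := by
  have : NeZero n := ⟨by omega⟩
  rw [cyc_eq_add_one, cyc_eq_add_one, Ne, add_assoc, add_eq_left, Fin.ext_iff]
  simp [Fin.val_add, Nat.mod_eq_of_lt hn]

lemma transpose_cycBidiag_mul_apply [Ring R] (d c : Fin n → R) (B : Matrix (Fin n) (Fin n) R)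
    (i j : Fin n) :
    ((cycBidiag d c).transpose * B) (cyc i) j = d (cyc i) * B (cyc i) j - c i * B i j := by
  simp [Matrix.mul_apply, cycBidiag, sub_mul, Finset.sum_sub_distrib, cyc_bijective.1.eq_iff]

variable [CommRing R]

lemma det_cycBidiag_submatrix_succ (d c : Fin (n + 2) → R) :
    ((cycBidiag d c).submatrix Fin.succ Fin.succ).det = ∏ i : Fin (n + 1), d i.succ := by
  have below_diag : ∀ i j : Fin (n + 1), j ≤ i → j.succ ≠ cyc i.succ := fun i j hji => by
    induction i using Fin.lastCases with
    | last => rw [Fin.succ_last, cyc_last]; exact Fin.succ_ne_zero _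
    | cast i =>
      rw [Fin.succ_castSucc, cyc_castSucc, Ne, Fin.succ_inj]
      rintro rfl
      exact hji.not_gt Fin.castSucc_lt_succ
  rw [Matrix.det_of_isUpperTriangular]
  · simp [cycBidiag, below_diag]
  · intro i j hij
    have hij : j < i := hij
    simp [cycBidiag, below_diag i j hij.le, hij.ne']

lemma det_cycBidiag_submatrix_castSucc (d c : Fin (n + 2) → R) :
    ((cycBidiag d c).submatrix Fin.castSucc Fin.succ).det =
      ∏ i : Fin (n + 1), -c i.castSucc := by
  have above_diag : ∀ i j : Fin (n + 1), i ≤ j → i.castSucc ≠ j.succ := fun i j hij =>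
    (Fin.castSucc_lt_succ_iff.2 hij).ne
  rw [Matrix.det_of_isLowerTriangular]
  · simp [cycBidiag, cyc_castSucc, above_diag]
  · intro i j hij
    have hij : i < j := hij
    simp [cycBidiag, cyc_castSucc, above_diag i j hij.le, hij.ne']

lemma det_cycBidiag (d c : Fin (n + 1) → R) :
    (cycBidiag d c).det = ∏ i, d i - ∏ i, c i := by
  rcases n with _ | n
  · simp [cycBidiag, Subsingleton.elim (cyc 0) (0 : Fin 1)]
  have zero_apply_zero : cycBidiag d c 0 0 = d 0 := by
    simp [cycBidiag, (cyc_ne_self (n := n + 2) (by omega) 0).symm]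
  have last_apply_zero : cycBidiag d c (Fin.last (n + 1)) 0 = -c (Fin.last (n + 1)) := by
    simp [cycBidiag, cyc_last, Fin.last_pos.ne']
  have apply_zero : ∀ i, i ≠ 0 ∧ i ≠ Fin.last (n + 1) → cycBidiag d c i 0 = 0 := by
    rintro i ⟨h0, hl⟩
    induction i using Fin.lastCases with
    | last => exact absurd rfl hl
    | cast i => simp [cycBidiag, h0, cyc_castSucc, (Fin.succ_ne_zero i).symm]
  rw [Matrix.det_succ_column_zero,
    Finset.sum_eq_add_of_mem (0 : Fin (n + 2)) (Fin.last (n + 1)) (Finset.mem_univ _)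
      (Finset.mem_univ _) Fin.last_pos.ne fun i _ hi => by simp [apply_zero i hi],
    zero_apply_zero, last_apply_zero, Fin.succAbove_zero, Fin.succAbove_last,
    det_cycBidiag_submatrix_succ, det_cycBidiag_submatrix_castSucc,
    Fin.prod_univ_succ d, Fin.prod_univ_castSucc c, Finset.prod_neg]
  have sign_sq : ((-1 : R) ^ (n + 1)) * (-1) ^ (n + 1) = 1 := by simp [← mul_pow]
  simp only [Finset.card_univ, Fintype.card_fin, Fin.val_zero, pow_zero, Fin.val_last]
  linear_combination (-c (Fin.last (n + 1)) * ∏ i : Fin (n + 1), c i.castSucc) * sign_sq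

end CyclicBidiagonal

section WheelDeterminant

lemma extendOne_eq_snoc {m : ℕ} (y : Fin m → ℝ) :
    extendOne (m + 1) y = (Fin.snoc y 1 : Fin (m + 1) → ℝ) := rfl

lemma wheelLap_eq_transpose_cycBidiag_mul {g : ℕ} (hg : 3 ≤ g) (x y ρ : Fin g → ℝ)
    (hρ : ∀ i, ρ i ≠ 0)
    (h : ∀ i, x (cyc i) + x (cyc (cyc i)) + y (cyc i) =
      x (cyc (cyc i)) * ρ (cyc i) + x (cyc i) / ρ i) :
    wheelLap g x y =
      (cycBidiag (fun i => x (cyc i) * ρ i) (fun i => x (cyc i))).transpose *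
        cycBidiag (fun _ => 1) (fun i => (ρ i)⁻¹) := by
  ext i j
  obtain ⟨i, rfl⟩ := cyc_bijective.2 i
  rw [transpose_cycBidiag_mul_apply]
  have h1 : cyc i ≠ i := cyc_ne_self (by omega) i
  have h2 : cyc (cyc i) ≠ cyc i := cyc_ne_self (by omega) _
  have h3 : cyc (cyc i) ≠ i := cyc_cyc_ne_self hg i
  rcases eq_or_ne j (cyc i) with rfl | hj1
  · simp [wheelLap, cycBidiag, h, h1.symm, h2.symm, div_eq_mul_inv]
  rcases eq_or_ne j (cyc (cyc i)) with rfl | hj2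
  · simp [wheelLap, cycBidiag, h2, h2.symm, h3.symm, hρ]
  rcases eq_or_ne j i with rfl | hj3
  · simp [wheelLap, cycBidiag, h1, h1.symm, h3.symm]
  · simp [wheelLap, cycBidiag, hj1, hj1.symm, hj2, hj3.symm, cyc_bijective.1.eq_iff]

/- The triangular factors are read off the Riccati form of the recursion, with
`ρ i = w (cyc i) * (1 + w i * y i) / w i`; the quotients of impedances telescope around the rim. -/
lemma det_wheelLap_of_cyclic_impedance {m : ℕ} (hm : 2 ≤ m) {x y w : Fin (m + 1) → ℝ}
    (hx : ∀ i, x i ≠ 0) (hw : ∀ i, w i ≠ 0) (hyw : ∀ i, 1 + w i * y i ≠ 0)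
    (h : ∀ i, w (cyc i) = w i / (1 + w i * y i) + (x (cyc i))⁻¹) :
    (wheelLap (m + 1) x y).det =
      (∏ i, x i) * ((∏ i, (1 + w i * y i) - 1) ^ 2 / ∏ i, (1 + w i * y i)) := by
  set ρ : Fin (m + 1) → ℝ := fun i => w (cyc i) / w i * (1 + w i * y i) with hρ
  have prod_cyc : ∀ f : Fin (m + 1) → ℝ, ∏ i, f (cyc i) = ∏ i, f i := cyc_bijective.prod_comp
  have prod_ρ : ∏ i, ρ i = ∏ i, (1 + w i * y i) := by
    have : ∏ i, w i ≠ 0 := Finset.prod_ne_zero_iff.2 fun i _ => hw i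
    simp only [hρ, Finset.prod_mul_distrib, Finset.prod_div_distrib, prod_cyc w, div_self this,
      one_mul]
  have series : ∀ i, x (cyc i) * (ρ i - 1) = 1 / w i + y i := fun i => by
    have := hx (cyc i)
    have := hw i
    have := hyw i
    simp only [hρ, h i]
    field_simp
    ring
  have parallel : ∀ i, x (cyc i) * (1 - 1 / ρ i) = 1 / w (cyc i) := fun i => by
    have := hx (cyc i)
    have := hw i
    have := hyw i
    have hwc := hw (cyc i)
    have key : x (cyc i) * w (cyc i) * (1 + w i * y i) = x (cyc i) * w i + (1 + w i * y i) := by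
      rw [h i]
      field_simp
    simp only [hρ]
    field_simp
    linear_combination key
  have factor := wheelLap_eq_transpose_cycBidiag_mul (by omega) x y ρ
    (fun i => mul_ne_zero (div_ne_zero (hw _) (hw i)) (hyw i))
    fun i => by linear_combination parallel i - series (cyc i)
  rw [factor, Matrix.det_mul, Matrix.det_transpose, det_cycBidiag, det_cycBidiag,
    Finset.prod_mul_distrib, prod_cyc x, Finset.prod_inv_distrib, prod_ρ, Finset.prod_const_one]
  have : ∏ i, (1 + w i * y i) ≠ 0 := Finset.prod_ne_zero_iff.2 fun i _ => hyw i
  field_simp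

end WheelDeterminant

section Trajectory

variable {α β : Type*} (f : α → β → β)

/-- The trajectory of the initial value `b` under the steps `f (q 0)`, `f (q 1)`, …: entry `i` is
the value reached after the first `i` steps. -/
def trajectory {m : ℕ} (b : β) (q : Fin m → α) (i : Fin (m + 1)) : β :=
  Fin.induction (motive := fun _ => β) b (fun j z => f (q j) z) i

variable {f} {m : ℕ}

@[simp]
lemma trajectory_zero (b : β) (q : Fin m → α) : trajectory f b q 0 = b := rfl

lemma trajectory_succ (b : β) (q : Fin m → α) (i : Fin m) :
    trajectory f b q i.succ = f (q i) (trajectory f b q i.castSucc) :=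
  Fin.induction_succ _ _ _

lemma trajectory_cons_succ (b : β) (a : α) (q : Fin m → α) (i : Fin (m + 1)) :
    trajectory f b (Fin.cons a q : Fin (m + 1) → α) i.succ = trajectory f (f a b) q i := by
  induction i using Fin.induction with
  | zero => rfl
  | succ i ih =>
    rw [trajectory_succ, ← Fin.succ_castSucc, ih, trajectory_succ, Fin.cons_succ]

lemma trajectory_invariant {P : β → Prop} {q : Fin m → α} {b : β} (hb : P b)
    (hf : ∀ i z, P z → P (f (q i) z)) (i : Fin (m + 1)) : P (trajectory f b q i) := by
  induction i using Fin.induction with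
  | zero => exact hb
  | succ i ih => exact trajectory_succ b q i ▸ hf i _ ih

lemma measurable_trajectory [MeasurableSpace α] [MeasurableSpace β]
    (hf : Measurable fun p : α × β => f p.1 p.2) (i : Fin (m + 1)) :
    Measurable fun p : β × (Fin m → α) => trajectory f p.1 p.2 i := by
  induction i using Fin.induction with
  | zero => exact measurable_fst
  | succ i ih =>
    simp only [trajectory_succ]
    exact hf.comp (((measurable_pi_apply i).comp measurable_snd).prodMk ih)

end Trajectory

section LadderNetwork

/-- The impedance after one rung of a ladder network: a load of impedance `w` is put in parallel
with a conductance `a.1` (a rim edge), then in series with a conductance `a.2` (a spoke). -/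
noncomputable def ladderStep (a : ℝ × ℝ) (w : ℝ) : ℝ := w / (1 + w * a.1) + a.2⁻¹

variable {m : ℕ}

/-- The impedances along a ladder network with rungs `q 0, …, q (m - 1)` and load `w`. -/
noncomputable def impedance (w : ℝ) (q : Fin m → ℝ × ℝ) : Fin (m + 1) → ℝ :=
  trajectory ladderStep w q

/-- The impedance of the whole ladder network in parallel with one further unit conductance, the
rim edge of weight `1`. -/
noncomputable def returnImpedance (w : ℝ) (q : Fin m → ℝ × ℝ) : ℝ :=
  impedance w q (Fin.last m) / (1 + impedance w q (Fin.last m))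

/-- The product of the factors `1 + z * y` by which the impedance `z` is divided at each rim edge
of weight `y`, the last one being the unit conductance of `returnImpedance`. -/
noncomputable def ladderGain (w : ℝ) (q : Fin m → ℝ × ℝ) : ℝ :=
  (∏ i, (1 + impedance w q i.castSucc * (q i).1)) * (1 + impedance w q (Fin.last m))

lemma impedance_nonneg {w : ℝ} (hw : 0 ≤ w) {q : Fin m → ℝ × ℝ} (hq : 0 ≤ q) (i : Fin (m + 1)) :
    0 ≤ impedance w q i :=
  trajectory_invariant (P := (0 ≤ ·)) hw (fun i z hz => by
    have hy : 0 ≤ (q i).1 := (hq i).1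
    have hx : 0 ≤ (q i).2 := (hq i).2
    unfold ladderStep
    positivity) i

lemma impedance_pos {w : ℝ} (hw : 0 < w) {q : Fin m → ℝ × ℝ} (hq : 0 ≤ q) (i : Fin (m + 1)) :
    0 < impedance w q i :=
  trajectory_invariant (P := (0 < ·)) hw (fun i z hz => by
    have hy : 0 ≤ (q i).1 := (hq i).1
    have hx : 0 ≤ (q i).2 := (hq i).2
    unfold ladderStep
    positivity) i

lemma measurable_impedance (i : Fin (m + 1)) :
    Measurable fun p : ℝ × (Fin m → ℝ × ℝ) => impedance p.1 p.2 i :=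
  measurable_trajectory (by unfold ladderStep; fun_prop) i

lemma measurable_returnImpedance :
    Measurable fun p : ℝ × (Fin m → ℝ × ℝ) => returnImpedance p.1 p.2 :=
  (measurable_impedance _).div ((measurable_impedance _).const_add 1)

lemma measurable_ladderGain :
    Measurable fun p : ℝ × (Fin m → ℝ × ℝ) => ladderGain p.1 p.2 := by
  have := measurable_impedance (m := m)
  unfold ladderGain
  fun_prop

lemma returnImpedance_nonneg {w : ℝ} (hw : 0 ≤ w) {q : Fin m → ℝ × ℝ} (hq : 0 ≤ q) :
    0 ≤ returnImpedance w q := by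
  have := impedance_nonneg hw hq (Fin.last m)
  unfold returnImpedance
  positivity

lemma returnImpedance_le_one {w : ℝ} (hw : 0 ≤ w) {q : Fin m → ℝ × ℝ} (hq : 0 ≤ q) :
    returnImpedance w q ≤ 1 := by
  have := impedance_nonneg hw hq (Fin.last m)
  exact div_le_one_of_le₀ (by linarith) (by linarith)

lemma one_lt_ladderGain {w : ℝ} (hw : 0 < w) {q : Fin m → ℝ × ℝ} (hq : 0 ≤ q) :
    1 < ladderGain w q :=
  one_lt_mul_of_le_of_lt
    (Finset.one_le_prod fun i _ => le_add_of_nonneg_right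
      (mul_nonneg (impedance_nonneg hw.le hq _) (hq i).1))
    (lt_add_of_pos_right 1 (impedance_pos hw hq _))

lemma hasDerivAt_ladderStep {a : ℝ × ℝ} {w : ℝ} (h : 1 + w * a.1 ≠ 0) :
    HasDerivAt (ladderStep a) ((1 + w * a.1) ^ 2)⁻¹ w := by
  have := ((hasDerivAt_id w).div (((hasDerivAt_id w).mul_const a.1).const_add 1) h).add_const a.2⁻¹
  refine this.congr_deriv ?_
  rw [id]
  field_simp
  ring

lemma hasDerivAt_impedance_last {w : ℝ} (hw : 0 ≤ w) {q : Fin m → ℝ × ℝ} (hq : 0 ≤ q) :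
    HasDerivAt (fun w => impedance w q (Fin.last m))
      ((∏ i, (1 + impedance w q i.castSucc * (q i).1)) ^ 2)⁻¹ w := by
  induction m generalizing w with
  | zero => simpa [impedance] using hasDerivAt_id' w
  | succ m ih =>
    induction q using Fin.consCases with | cons a q =>
    have ha : 0 ≤ a := hq 0
    have hq : 0 ≤ q := fun i => hq i.succ
    have hden : 0 < 1 + w * a.1 := by have := mul_nonneg hw ha.1; linarith
    have hstep : 0 ≤ ladderStep a w :=
      add_nonneg (div_nonneg hw hden.le) (inv_nonneg.2 ha.2)
    have chain := (ih hstep hq).comp w (hasDerivAt_ladderStep hden.ne')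
    rw [← mul_inv, ← mul_pow, mul_comm] at chain
    simpa only [impedance, Function.comp_def, ← Fin.succ_last, trajectory_cons_succ,
      Fin.prod_univ_succ, Fin.castSucc_zero, trajectory_zero, Fin.cons_zero, Fin.cons_succ,
      ← Fin.succ_castSucc] using chain

lemma hasDerivAt_returnImpedance {w : ℝ} (hw : 0 ≤ w) {q : Fin m → ℝ × ℝ} (hq : 0 ≤ q) :
    HasDerivAt (fun w => returnImpedance w q) (ladderGain w q ^ 2)⁻¹ w := by
  have hZ := impedance_nonneg hw hq (Fin.last m)
  have hden : 1 + impedance w q (Fin.last m) ≠ 0 := by linarith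
  have hlast := hasDerivAt_impedance_last hw hq
  refine (hlast.div (hlast.const_add 1) hden).congr_deriv ?_
  rw [ladderGain, mul_pow, mul_inv]
  field_simp
  ring

end LadderNetwork

section LogCoordinates

/-- The rung with logarithmic coordinates `p` at impedance `z`: its rim edge divides the impedance
by `exp p.1` and its spoke then multiplies it by `exp p.2`. -/
noncomputable def logRung (p : ℝ × ℝ) (z : ℝ) : ℝ × ℝ :=
  (z⁻¹ * (Real.exp p.1 - 1), (z / Real.exp p.1 * (Real.exp p.2 - 1))⁻¹)

variable {m : ℕ}

/-- The impedances along the ladder with load `w` and logarithmic coordinates `p`. -/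
noncomputable def logImpedance (w : ℝ) (p : Fin m → ℝ × ℝ) : Fin (m + 1) → ℝ :=
  trajectory (fun p z => z * Real.exp (p.2 - p.1)) w p

/-- The ladder with load `w` and logarithmic coordinates `p`. -/
noncomputable def logLadder (w : ℝ) (p : Fin m → ℝ × ℝ) (i : Fin m) : ℝ × ℝ :=
  logRung (p i) (logImpedance w p i.castSucc)

lemma one_add_mul_logRung_fst (p : ℝ × ℝ) {z : ℝ} (hz : z ≠ 0) :
    1 + z * (logRung p z).1 = Real.exp p.1 := by
  rw [logRung, mul_inv_cancel_left₀ hz, add_sub_cancel]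

lemma ladderStep_logRung (p : ℝ × ℝ) {z : ℝ} (hz : z ≠ 0) :
    ladderStep (logRung p z) z = z * Real.exp (p.2 - p.1) := by
  rw [ladderStep, one_add_mul_logRung_fst p hz, logRung, inv_inv, Real.exp_sub]
  ring

lemma logImpedance_pos {w : ℝ} (hw : 0 < w) (p : Fin m → ℝ × ℝ) (i : Fin (m + 1)) :
    0 < logImpedance w p i :=
  trajectory_invariant (P := (0 < ·)) hw (fun _ z (hz : 0 < z) => by positivity) i

lemma logImpedance_last (w : ℝ) (p : Fin m → ℝ × ℝ) :
    logImpedance w p (Fin.last m) = w * Real.exp (∑ i, (p i).2 - ∑ i, (p i).1) := by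
  induction m generalizing w with
  | zero => simp [logImpedance]
  | succ m ih =>
    induction p using Fin.consCases with | cons a p =>
    rw [logImpedance, ← Fin.succ_last, trajectory_cons_succ]
    refine (ih _ p).trans ?_
    rw [mul_assoc, ← Real.exp_add, Fin.sum_univ_succ, Fin.sum_univ_succ]
    simp only [Fin.cons_zero, Fin.cons_succ]
    ring_nf

lemma impedance_logLadder {w : ℝ} (hw : 0 < w) (p : Fin m → ℝ × ℝ) :
    impedance w (logLadder w p) = logImpedance w p := by
  ext i
  induction i using Fin.induction with
  | zero => rfl
  | succ i ih =>
    rw [impedance, trajectory_succ, ← impedance, ih, logLadder,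
      ladderStep_logRung _ (logImpedance_pos hw p _).ne', logImpedance, trajectory_succ]

lemma logLadder_cons (w : ℝ) (a : ℝ × ℝ) (p : Fin m → ℝ × ℝ) :
    logLadder w (Fin.cons a p : Fin (m + 1) → ℝ × ℝ) =
      Fin.cons (logRung a w) (logLadder (w * Real.exp (a.2 - a.1)) p) := by
  ext i : 1
  induction i using Fin.cases with
  | zero => rfl
  | succ i =>
    rw [logLadder, Fin.cons_succ, Fin.cons_succ, ← Fin.succ_castSucc, logImpedance,
      trajectory_cons_succ]
    rfl

lemma measurable_logImpedance (i : Fin (m + 1)) :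
    Measurable fun z : ℝ × (Fin m → ℝ × ℝ) => logImpedance z.1 z.2 i :=
  measurable_trajectory (by fun_prop) i

lemma measurable_logLadder :
    Measurable fun z : ℝ × (Fin m → ℝ × ℝ) => logLadder z.1 z.2 :=
  measurable_pi_lambda _ fun i => by
    have := measurable_logImpedance (m := m) i.castSucc
    unfold logLadder logRung
    fun_prop

lemma lintegral_logRung {z : ℝ} (hz : 0 < z) {H : ℝ × ℝ → ENNReal} (hH : Measurable H) :
    ∫⁻ a, ENNReal.ofReal (a.2⁻¹ ^ 2) * H a ∂(posVol.prod posVol) =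
      ∫⁻ p, ENNReal.ofReal (Real.exp p.2) * H (logRung p z) ∂(posVol.prod posVol) := by
  have hH_rung : Measurable fun p => H (logRung p z) :=
    hH.comp (f := fun p => logRung p z) (by unfold logRung; fun_prop)
  have hrhs : Measurable fun p : ℝ × ℝ => ENNReal.ofReal (Real.exp p.2) * H (logRung p z) :=
    Measurable.mul (by fun_prop) hH_rung
  rw [lintegral_prod _ (by fun_prop), lintegral_prod _ hrhs.aemeasurable,
    lintegral_posVol_exp_sub_one (inv_pos.2 hz)]
  refine lintegral_congr fun t => ?_
  rw [lintegral_posVol_inv_sq_mul fun x => H (z⁻¹ * (Real.exp t - 1), x),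
    lintegral_posVol_exp_sub_one (div_pos hz (Real.exp_pos t)),
    ← lintegral_const_mul' _ _ ENNReal.ofReal_ne_top]
  refine lintegral_congr fun s => ?_
  rw [← mul_assoc, ← ENNReal.ofReal_mul (by positivity)]
  congr 2
  field_simp

lemma lintegral_logLadder {w : ℝ} (hw : 0 < w) {H : (Fin m → ℝ × ℝ) → ENNReal}
    (hH : Measurable H) :
    ∫⁻ q, ENNReal.ofReal (∏ i, (q i).2⁻¹ ^ 2) * H q ∂(Measure.pi fun _ => posVol.prod posVol) =
      ∫⁻ p, ENNReal.ofReal (Real.exp (∑ i, (p i).2)) * H (logLadder w p)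
        ∂(Measure.pi fun _ => posVol.prod posVol) := by
  induction m generalizing w with
  | zero => exact lintegral_congr fun q => by simp [Subsingleton.elim (logLadder w q) q]
  | succ m ih =>
    have hrhs : Measurable fun p : Fin (m + 1) → ℝ × ℝ =>
        ENNReal.ofReal (Real.exp (∑ i, (p i).2)) * H (logLadder w p) :=
      Measurable.mul (by fun_prop) (hH.comp (measurable_logLadder.comp measurable_prodMk_left))
    have hH_cons : Measurable fun z : (ℝ × ℝ) × (Fin m → ℝ × ℝ) => H (Fin.cons z.1 z.2) :=
      hH.comp measurable_fin_cons
    have hinner : Measurable fun a => ∫⁻ q : Fin m → ℝ × ℝ,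
        ENNReal.ofReal (∏ i, (q i).2⁻¹ ^ 2) * H (Fin.cons a q)
          ∂(Measure.pi fun _ => posVol.prod posVol) :=
      Measurable.lintegral_prod_right' (f := fun z : (ℝ × ℝ) × (Fin m → ℝ × ℝ) =>
        ENNReal.ofReal (∏ i, (z.2 i).2⁻¹ ^ 2) * H (Fin.cons z.1 z.2)) (by fun_prop)
    rw [lintegral_pi_succ _ _ (by fun_prop), lintegral_pi_succ _ _ hrhs]
    calc _ = ∫⁻ a : ℝ × ℝ, ENNReal.ofReal (a.2⁻¹ ^ 2) * ∫⁻ q : Fin m → ℝ × ℝ,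
            ENNReal.ofReal (∏ i, (q i).2⁻¹ ^ 2) * H (Fin.cons a q)
              ∂(Measure.pi fun _ => posVol.prod posVol) ∂(posVol.prod posVol) := by
          refine lintegral_congr fun a => ?_
          simp_rw [← lintegral_const_mul' _ _ ENNReal.ofReal_ne_top, Fin.prod_univ_succ,
            Fin.cons_zero, Fin.cons_succ, ENNReal.ofReal_mul (sq_nonneg _), mul_assoc]
      _ = ∫⁻ a : ℝ × ℝ, ENNReal.ofReal (Real.exp a.2) * ∫⁻ q : Fin m → ℝ × ℝ,
            ENNReal.ofReal (∏ i, (q i).2⁻¹ ^ 2) * H (Fin.cons (logRung a w) q)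
              ∂(Measure.pi fun _ => posVol.prod posVol) ∂(posVol.prod posVol) :=
          lintegral_logRung hw hinner
      _ = _ := by
          refine lintegral_congr fun a => ?_
          rw [ih (H := fun q => H (Fin.cons (logRung a w) q))
              (mul_pos hw (Real.exp_pos (a.2 - a.1))) (hH_cons.comp measurable_prodMk_left),
            ← lintegral_const_mul' _ _ ENNReal.ofReal_ne_top]
          simp_rw [Fin.sum_univ_succ, Real.exp_add, ENNReal.ofReal_mul (Real.exp_nonneg _),
            mul_assoc, logLadder_cons, Fin.cons_zero, Fin.cons_succ]

end LogCoordinates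

section LadderIntegral

variable {m : ℕ}

/-- The load for which the ladder with logarithmic coordinates `p` has impedance `exp τ - 1`. -/
noncomputable def logLoad (p : Fin m → ℝ × ℝ) (τ : ℝ) : ℝ :=
  Real.exp (∑ i, (p i).1 - ∑ i, (p i).2) * (Real.exp τ - 1)

lemma logLoad_pos (p : Fin m → ℝ × ℝ) {τ : ℝ} (hτ : 0 < τ) : 0 < logLoad p τ :=
  mul_pos (Real.exp_pos _) (sub_pos.2 (Real.one_lt_exp_iff.2 hτ))

lemma one_add_impedance_logLoad_last (p : Fin m → ℝ × ℝ) {τ : ℝ} (hτ : 0 < τ) :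
    1 + impedance (logLoad p τ) (logLadder (logLoad p τ) p) (Fin.last m) = Real.exp τ := by
  rw [impedance_logLadder (logLoad_pos p hτ), logImpedance_last, logLoad, mul_right_comm,
    ← Real.exp_add, sub_add_sub_cancel, sub_self, Real.exp_zero, one_mul, add_sub_cancel]

lemma returnImpedance_logLoad_lt_iff (p : Fin m → ℝ × ℝ) {τ : ℝ} (hτ : 0 < τ) :
    returnImpedance (logLoad p τ) (logLadder (logLoad p τ) p) < logLoad p τ ↔
      ∑ i, (p i).2 < τ + ∑ i, (p i).1 := by
  have hlast := one_add_impedance_logLoad_last p hτ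
  have hload : logLoad p τ * Real.exp τ =
      (Real.exp τ - 1) * Real.exp (τ + ∑ i, (p i).1 - ∑ i, (p i).2) := by
    rw [logLoad, mul_right_comm, ← Real.exp_add, mul_comm]
    ring_nf
  rw [returnImpedance, hlast, eq_sub_of_add_eq' hlast, div_lt_iff₀ (Real.exp_pos τ), hload,
    lt_mul_iff_one_lt_right (sub_pos.2 (Real.one_lt_exp_iff.2 hτ)), Real.one_lt_exp_iff, sub_pos]

lemma ladderGain_logLoad (p : Fin m → ℝ × ℝ) {τ : ℝ} (hτ : 0 < τ) :
    ladderGain (logLoad p τ) (logLadder (logLoad p τ) p) = Real.exp (τ + ∑ i, (p i).1) := by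
  have hw := logLoad_pos p hτ
  rw [ladderGain, one_add_impedance_logLoad_last p hτ, impedance_logLadder hw, mul_comm,
    Real.exp_add, Real.exp_sum]
  simp_rw [logLadder, one_add_mul_logRung_fst _ (logImpedance_pos hw p _).ne']

/-- A function `G` of the gain of the ladder with load `w` and rungs `q`, cut off to the loads that
exceed the impedance returning around the rim: only these belong to a positive first spoke. -/
noncomputable def gainIntegrand (G : ℝ → ENNReal) (w : ℝ) (q : Fin m → ℝ × ℝ) : ENNReal :=
  if returnImpedance w q < w then G (ladderGain w q) else 0

lemma measurable_gainIntegrand {G : ℝ → ENNReal} (hG : Measurable G) :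
    Measurable fun z : ℝ × (Fin m → ℝ × ℝ) => gainIntegrand G z.1 z.2 :=
  Measurable.ite (measurableSet_lt measurable_returnImpedance measurable_fst)
    (hG.comp measurable_ladderGain) measurable_const

lemma lintegral_gainIntegrand_logLadder (p : Fin m → ℝ × ℝ) (G : ℝ → ENNReal) :
    ∫⁻ w, ENNReal.ofReal (Real.exp (∑ i, (p i).2)) * gainIntegrand G w (logLadder w p) ∂posVol =
      ∫⁻ τ, (if ∑ i, (p i).2 < τ + ∑ i, (p i).1 then
        ENNReal.ofReal (Real.exp (τ + ∑ i, (p i).1)) * G (Real.exp (τ + ∑ i, (p i).1)) else 0)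
          ∂posVol := by
  rw [lintegral_posVol_exp_sub_one (Real.exp_pos (∑ i, (p i).1 - ∑ i, (p i).2))]
  refine lintegral_congr_ae ?_
  filter_upwards [ae_posVol_pos] with τ hτ
  rw [← logLoad, gainIntegrand, ladderGain_logLoad p hτ, ← mul_assoc,
    ← ENNReal.ofReal_mul (by positivity), mul_ite, mul_zero]
  simp_rw [returnImpedance_logLoad_lt_iff p hτ, ← Real.exp_add]
  ring_nf

lemma lintegral_gainIntegrand {G : ℝ → ENNReal} (hG : Measurable G) :
    ∫⁻ q : Fin m → ℝ × ℝ, ENNReal.ofReal (∏ i, (q i).2⁻¹ ^ 2) * ∫⁻ w, gainIntegrand G w q ∂posVol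
        ∂(Measure.pi fun _ => posVol.prod posVol) =
      ∫⁻ σ, ENNReal.ofReal ((σ ^ m / m.factorial) ^ 2) *
        (ENNReal.ofReal (Real.exp σ) * G (Real.exp σ)) ∂posVol := by
  have hgain := measurable_gainIntegrand (m := m) hG
  have hlog : Measurable fun z : ℝ × (Fin m → ℝ × ℝ) => gainIntegrand G z.1 (logLadder z.1 z.2) :=
    hgain.comp (measurable_fst.prodMk measurable_logLadder)
  let E : (Fin m → ℝ × ℝ) → ENNReal := fun q => ENNReal.ofReal (∏ i, (q i).2⁻¹ ^ 2)
  let L : (Fin m → ℝ × ℝ) → ENNReal := fun p => ENNReal.ofReal (Real.exp (∑ i, (p i).2))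
  calc _ = ∫⁻ q : Fin m → ℝ × ℝ, ∫⁻ w, E q * gainIntegrand G w q ∂posVol
        ∂(Measure.pi fun _ => posVol.prod posVol) :=
        lintegral_congr fun q => (lintegral_const_mul' _ _ ENNReal.ofReal_ne_top).symm
    _ = ∫⁻ w, ∫⁻ q : Fin m → ℝ × ℝ, E q * gainIntegrand G w q
        ∂(Measure.pi fun _ => posVol.prod posVol) ∂posVol :=
        lintegral_lintegral_swap
          (Measurable.mul (by fun_prop) (hgain.comp measurable_swap)).aemeasurable
    _ = ∫⁻ w, ∫⁻ p : Fin m → ℝ × ℝ, L p * gainIntegrand G w (logLadder w p)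
        ∂(Measure.pi fun _ => posVol.prod posVol) ∂posVol := by
        refine lintegral_congr_ae ?_
        filter_upwards [ae_posVol_pos] with w hw
        exact lintegral_logLadder hw (hgain.comp measurable_prodMk_left)
    _ = ∫⁻ p : Fin m → ℝ × ℝ, ∫⁻ w, L p * gainIntegrand G w (logLadder w p) ∂posVol
        ∂(Measure.pi fun _ => posVol.prod posVol) :=
        lintegral_lintegral_swap (Measurable.mul (by fun_prop) hlog).aemeasurable
    _ = ∫⁻ σ, ENNReal.ofReal ((σ ^ m / m.factorial) ^ 2) *
        (ENNReal.ofReal (Real.exp σ) * G (Real.exp σ)) ∂posVol := by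
        rw [← lintegral_lintegral_sum_lt_add_sum m (by fun_prop)]
        exact lintegral_congr fun p => lintegral_gainIntegrand_logLadder p G

end LadderIntegral

section WheelIntegral

variable {m : ℕ}

lemma det_wheelLap_of_ladder (hm : 2 ≤ m) {w : ℝ} {q : Fin m → ℝ × ℝ} (hw : 0 < w) (hq : 0 ≤ q)
    (hspoke : ∀ i, (q i).2 ≠ 0) (hret : returnImpedance w q < w) :
    (wheelLap (m + 1) (Fin.cons (w - returnImpedance w q)⁻¹ fun i => (q i).2)
      (extendOne (m + 1) fun i => (q i).1)).det =
      (w - returnImpedance w q)⁻¹ * (∏ i, (q i).2) *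
        ((ladderGain w q - 1) ^ 2 / ladderGain w q) := by
  have hZ := impedance_pos hw hq
  have hrim : extendOne (m + 1) (fun i => (q i).1) =
      (Fin.snoc (fun i => (q i).1) 1 : Fin (m + 1) → ℝ) := extendOne_eq_snoc _
  have hgain : ∏ i, (1 + impedance w q i * (Fin.snoc (fun i => (q i).1) 1 : Fin (m + 1) → ℝ) i) =
      ladderGain w q := by
    simp [ladderGain, Fin.prod_univ_castSucc]
  rw [hrim, det_wheelLap_of_cyclic_impedance hm (w := impedance w q), hgain, Fin.prod_univ_succ]
  · simp
  · intro i
    induction i using Fin.cases with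
    | zero => simpa using (sub_pos.2 hret).ne'
    | succ i => simpa using hspoke i
  · exact fun i => (hZ i).ne'
  · intro i
    induction i using Fin.lastCases with
    | last =>
      have := hZ (Fin.last m)
      simp only [Fin.snoc_last]
      positivity
    | cast i =>
      have := hZ i.castSucc
      have : 0 ≤ (q i).1 := (hq i).1
      simp only [Fin.snoc_castSucc]
      positivity
  · intro i
    induction i using Fin.lastCases with
    | last => simp [cyc_last, returnImpedance, impedance]
    | cast i => simp [cyc_castSucc, impedance, trajectory_succ, ladderStep]

lemma lintegral_first_spoke (hm : 2 ≤ m) {q : Fin m → ℝ × ℝ} (hq : 0 ≤ q)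
    (hspoke : ∀ i, (q i).2 ≠ 0) :
    ∫⁻ x, ENNReal.ofReal ((wheelLap (m + 1) (Fin.cons x fun i => (q i).2)
        (extendOne (m + 1) fun i => (q i).1)).det⁻¹ ^ 2) ∂posVol =
      ENNReal.ofReal (∏ i, (q i).2⁻¹ ^ 2) *
        ∫⁻ w, gainIntegrand (fun P => ENNReal.ofReal ((P + 1) / (P - 1) ^ 3)) w q ∂posVol := by
  set D : ℝ → ℝ := fun x => (wheelLap (m + 1) (Fin.cons x fun i => (q i).2)
    (extendOne (m + 1) fun i => (q i).1)).det
  calc ∫⁻ x, ENNReal.ofReal ((D x)⁻¹ ^ 2) ∂posVol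
    _ = ∫⁻ x, ENNReal.ofReal (x⁻¹ ^ 2) * ENNReal.ofReal ((x * (D x)⁻¹) ^ 2) ∂posVol := by
      refine lintegral_congr_ae ?_
      filter_upwards [ae_posVol_pos] with x hx
      rw [← ENNReal.ofReal_mul (sq_nonneg _), ← mul_pow, inv_mul_cancel_left₀ hx.ne']
    _ = ∫⁻ z, ENNReal.ofReal ((z⁻¹ * (D z⁻¹)⁻¹) ^ 2) ∂posVol :=
      lintegral_posVol_inv_sq_mul _
    _ = ∫⁻ w, (if returnImpedance w q < w then ENNReal.ofReal (1 - (ladderGain w q ^ 2)⁻¹) *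
          ENNReal.ofReal (((w - returnImpedance w q)⁻¹ * (D (w - returnImpedance w q)⁻¹)⁻¹) ^ 2)
          else 0) ∂posVol :=
      lintegral_posVol_sub (measurable_returnImpedance.comp measurable_prodMk_right)
        (returnImpedance_nonneg le_rfl hq) (fun w hw => returnImpedance_le_one hw hq)
        (fun w hw => hasDerivAt_returnImpedance hw hq)
        (fun w hw => inv_lt_one_of_one_lt₀ (one_lt_pow₀ (one_lt_ladderGain hw hq) two_ne_zero)) _
    _ = _ := by
      rw [← lintegral_const_mul' _ _ ENNReal.ofReal_ne_top]
      refine lintegral_congr_ae ?_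
      filter_upwards [ae_posVol_pos] with w hw
      rw [gainIntegrand, mul_ite, mul_zero]
      refine ite_congr rfl (fun hret => ?_) fun _ => rfl
      have hP := one_lt_ladderGain hw hq
      have hP_pos : 0 < ladderGain w q - 1 := sub_pos.2 hP
      have hz : w - returnImpedance w q ≠ 0 := (sub_pos.2 hret).ne'
      have hX : ∏ i, (q i).2 ≠ 0 := Finset.prod_ne_zero_iff.2 fun i _ => hspoke i
      rw [show D (w - returnImpedance w q)⁻¹ = _ from det_wheelLap_of_ladder hm hw hq hspoke hret,
        Finset.prod_pow, Finset.prod_inv_distrib,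
        ← ENNReal.ofReal_mul' (sq_nonneg _), ← ENNReal.ofReal_mul (sq_nonneg _)]
      congr 1
      field_simp
      ring

lemma measurable_det_wheelLap (g : ℕ) : Measurable fun z : (Fin g → ℝ) × (Fin (g - 1) → ℝ) =>
    (wheelLap g z.1 (extendOne g z.2)).det := by
  have hext : ∀ i, Measurable fun z : (Fin g → ℝ) × (Fin (g - 1) → ℝ) => extendOne g z.2 i :=
    fun i => by
      unfold extendOne
      split_ifs <;> fun_prop
  have hentry : ∀ i j, Measurable fun z : (Fin g → ℝ) × (Fin (g - 1) → ℝ) =>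
      wheelLap g z.1 (extendOne g z.2) i j := fun i j => by
    have := hext i
    simp only [wheelLap, Matrix.of_apply]
    split_ifs <;> fun_prop
  simp only [Matrix.det_apply]
  fun_prop

lemma lintegral_wheel (hm : 2 ≤ m) :
    ∫⁻ z : (Fin (m + 1) → ℝ) × (Fin m → ℝ),
        ENNReal.ofReal ((wheelLap (m + 1) z.1 (extendOne (m + 1) z.2)).det⁻¹ ^ 2)
        ∂((Measure.pi fun _ => posVol).prod (Measure.pi fun _ => posVol)) =
      ∫⁻ σ, ENNReal.ofReal ((σ ^ m / m.factorial) ^ 2) * (ENNReal.ofReal (Real.exp σ) *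
        ENNReal.ofReal ((Real.exp σ + 1) / (Real.exp σ - 1) ^ 3)) ∂posVol := by
  have hmeas : Measurable fun z : (Fin (m + 1) → ℝ) × (Fin m → ℝ) =>
      ENNReal.ofReal ((wheelLap (m + 1) z.1 (extendOne (m + 1) z.2)).det⁻¹ ^ 2) :=
    ((measurable_det_wheelLap (m + 1)).inv.pow_const 2).ennreal_ofReal
  rw [lintegral_pi_succ_prod_pi posVol posVol hmeas,
    ← lintegral_gainIntegrand (G := fun P => ENNReal.ofReal ((P + 1) / (P - 1) ^ 3))
      (by fun_prop)]
  have hpos : ∀ᵐ a : ℝ × ℝ ∂(posVol.prod posVol), 0 < a.1 ∧ 0 < a.2 :=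
    (Measure.quasiMeasurePreserving_fst.ae ae_posVol_pos).and
      (Measure.quasiMeasurePreserving_snd.ae ae_posVol_pos)
  refine lintegral_congr_ae ?_
  filter_upwards [ae_pi_forall hpos] with q hq
  exact lintegral_first_spoke hm (fun i => ⟨(hq i).1.le, (hq i).2.le⟩) fun i => (hq i).2.ne'

end WheelIntegral

section ZetaSeries

lemma hasSum_sq_mul_geometric {𝕜 : Type*} [NormedField 𝕜] [CompleteSpace 𝕜] {x : 𝕜}
    (hx : ‖x‖ < 1) :
    HasSum (fun n : ℕ => ((n : 𝕜) + 1) ^ 2 * x ^ (n + 1)) (x * (1 + x) / (1 - x) ^ 3) := by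
  have hone := hasSum_choose_mul_geometric_of_norm_lt_one 1 hx
  have htwo := hasSum_choose_mul_geometric_of_norm_lt_one 2 hx
  have hterm : ∀ n : ℕ, ((n : 𝕜) + 1) ^ 2 * x ^ (n + 1) =
      x * (2 * (((n + 2).choose 2 : ℕ) * x ^ n) - ((n + 1).choose 1 : ℕ) * x ^ n) := by
    intro n
    have hchoose : 2 * (n + 2).choose 2 = (n + 2) * (n + 1) := by
      rw [Nat.choose_two_right]
      exact Nat.mul_div_cancel' (Nat.even_mul_pred_self (n + 2)).two_dvd
    have hchoose_cast := congrArg (Nat.cast (R := 𝕜)) hchoose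
    rw [Nat.choose_one_right]
    push_cast at hchoose_cast ⊢
    linear_combination (-x * x ^ n) * hchoose_cast
  have hval : x * (1 + x) / (1 - x) ^ 3 =
      x * (2 * (1 / (1 - x) ^ (2 + 1)) - 1 / (1 - x) ^ (1 + 1)) := by
    have : 1 - x ≠ 0 := sub_ne_zero.2 fun h => by simp [← h] at hx
    field_simp
    ring
  simp_rw [hterm, hval]
  exact ((htwo.mul_left 2).sub hone).mul_left x

lemma hasSum_sq_mul_exp {σ : ℝ} (hσ : 0 < σ) :
    HasSum (fun n : ℕ => ((n : ℝ) + 1) ^ 2 * Real.exp (-(((n : ℝ) + 1) * σ)))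
      (Real.exp σ * ((Real.exp σ + 1) / (Real.exp σ - 1) ^ 3)) := by
  have hgeom := hasSum_sq_mul_geometric (x := Real.exp (-σ)) (by simpa using hσ)
  have hval : Real.exp (-σ) * (1 + Real.exp (-σ)) / (1 - Real.exp (-σ)) ^ 3 =
      Real.exp σ * ((Real.exp σ + 1) / (Real.exp σ - 1) ^ 3) := by
    have : Real.exp σ - 1 ≠ 0 := (sub_pos.2 (Real.one_lt_exp_iff.2 hσ)).ne'
    rw [Real.exp_neg]
    field_simp
  rw [← hval]
  simpa only [← Real.exp_nat_mul, Nat.cast_add_one, mul_neg] using hgeom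

lemma lintegral_pow_succ_mul_exp_quotient {k : ℕ} (hk : 2 ≤ k) :
    ∫⁻ σ, ENNReal.ofReal (σ ^ (k + 1)) *
        ENNReal.ofReal (Real.exp σ * ((Real.exp σ + 1) / (Real.exp σ - 1) ^ 3)) ∂posVol =
      ENNReal.ofReal ((k + 1).factorial * ∑' n : ℕ, 1 / ((n : ℝ) + 1) ^ k) := by
  have hexpand : ∀ᵐ σ ∂posVol, ENNReal.ofReal (σ ^ (k + 1)) *
      ENNReal.ofReal (Real.exp σ * ((Real.exp σ + 1) / (Real.exp σ - 1) ^ 3)) =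
      ∑' n : ℕ, ENNReal.ofReal (((n : ℝ) + 1) ^ 2) *
        ENNReal.ofReal (σ ^ (k + 1) * Real.exp (-(((n : ℝ) + 1) * σ))) := by
    filter_upwards [ae_posVol_pos] with σ hσ
    have hsum := hasSum_sq_mul_exp hσ
    rw [← hsum.tsum_eq, ENNReal.ofReal_tsum_of_nonneg (fun n => by positivity) hsum.summable,
      ← ENNReal.tsum_mul_left]
    refine tsum_congr fun n => ?_
    rw [← ENNReal.ofReal_mul (by positivity), ← ENNReal.ofReal_mul (by positivity),
      mul_left_comm]
  have hzeta : Summable fun n : ℕ => 1 / ((n : ℝ) + 1) ^ k := by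
    simpa using (summable_nat_add_iff 1).2 (Real.summable_one_div_nat_pow.2 hk)
  rw [lintegral_congr_ae hexpand, lintegral_tsum fun n => by fun_prop, ← tsum_mul_left,
    ENNReal.ofReal_tsum_of_nonneg (fun n => by positivity) (hzeta.mul_left _)]
  refine tsum_congr fun n => ?_
  rw [lintegral_const_mul _ (by fun_prop), lintegral_pow_mul_exp _ (by positivity),
    ← ENNReal.ofReal_mul (by positivity)]
  congr 1
  field_simp
  ring

lemma lintegral_sq_simplex_volume_mul_exp_quotient {m : ℕ} (hm : 2 ≤ m) :
    ∫⁻ σ, ENNReal.ofReal ((σ ^ m / m.factorial) ^ 2) * (ENNReal.ofReal (Real.exp σ) *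
        ENNReal.ofReal ((Real.exp σ + 1) / (Real.exp σ - 1) ^ 3)) ∂posVol =
      ENNReal.ofReal ((2 * m).choose m * ∑' n : ℕ, 1 / ((n : ℝ) + 1) ^ (2 * m - 1)) := by
  have hchoose : ((2 * m).choose m : ℝ) = ((m.factorial : ℝ) ^ 2)⁻¹ * (2 * m).factorial := by
    rw [Nat.cast_choose ℝ (by lia), two_mul, Nat.add_sub_cancel, sq, inv_mul_eq_div]
  have hpow : 2 * m - 1 + 1 = 2 * m := by lia
  have := lintegral_pow_succ_mul_exp_quotient (k := 2 * m - 1) (by lia)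
  rw [hpow] at this
  rw [hchoose, mul_assoc, ENNReal.ofReal_mul (by positivity), ← this,
    ← lintegral_const_mul' _ _ ENNReal.ofReal_ne_top]
  refine lintegral_congr fun σ => ?_
  rw [← ENNReal.ofReal_mul (Real.exp_nonneg _), ← mul_assoc,
    ← ENNReal.ofReal_mul (inv_nonneg.2 (sq_nonneg _)), div_pow, ← pow_mul', inv_mul_eq_div]

end ZetaSeries

lemma integrable_and_integral_eq_of_lintegral_ofReal_eq {α : Type*} [MeasurableSpace α]
    {μ : Measure α} {f : α → ℝ} (hf : AEStronglyMeasurable f μ) (hf_nonneg : 0 ≤ᵐ[μ] f) {c : ℝ}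
    (hc : 0 ≤ c) (h : ∫⁻ a, ENNReal.ofReal (f a) ∂μ = ENNReal.ofReal c) :
    Integrable f μ ∧ ∫ a, f a ∂μ = c := by
  refine ⟨⟨hf, ?_⟩, ?_⟩
  · rw [hasFiniteIntegral_iff_ofReal hf_nonneg, h]
    exact ENNReal.ofReal_lt_top
  · rw [integral_eq_lintegral_of_nonneg_ae hf_nonneg hf, h, ENNReal.toReal_ofReal hc]

/-- The Feynman residue of the wheel graph with `g` spokes is finite and equals
`binomial(2(g−1), g−1) · ζ(2g−3)`. -/
theorem feynmanResidue_wheel (g : ℕ) (hg : 3 ≤ g) :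
    IntegrableOn
      (fun p : (Fin g → ℝ) × (Fin (g - 1) → ℝ) =>
        ((wheelLap g p.1 (extendOne g p.2)).det)⁻¹ ^ 2)
      {p | (∀ i, 0 < p.1 i) ∧ ∀ j, 0 < p.2 j} ∧
    ∫ p in {p : (Fin g → ℝ) × (Fin (g - 1) → ℝ) |
        (∀ i, 0 < p.1 i) ∧ ∀ j, 0 < p.2 j},
        ((wheelLap g p.1 (extendOne g p.2)).det)⁻¹ ^ 2 =
      (Nat.choose (2 * (g - 1)) (g - 1) : ℝ) *
        ∑' n : ℕ, 1 / ((n : ℝ) + 1) ^ (2 * g - 3) := by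
  obtain ⟨m, rfl⟩ : ∃ m, g = m + 1 := ⟨g - 1, by lia⟩
  have hm : 2 ≤ m := by lia
  rw [IntegrableOn, volume_restrict_forall_pos, show 2 * (m + 1) - 3 = 2 * m - 1 by lia]
  exact integrable_and_integral_eq_of_lintegral_ofReal_eq
    ((measurable_det_wheelLap (m + 1)).inv.pow_const 2).aestronglyMeasurable
    (.of_forall fun p => sq_nonneg _)
    (mul_nonneg (Nat.cast_nonneg _) (tsum_nonneg fun n => by positivity))
    ((lintegral_wheel hm).trans (lintegral_sq_simplex_volume_mul_exp_quotient hm))
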